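/- For every d×d density matrix ρ and Hermitian d×d matrix h, the sequence N ↦ ℰ(ρ^{⊗N}; h^{(N)})/N converges as N → ∞, and its limit equals the supremum ⨆_{N ≥ 1} ℰ(ρ^{⊗N}; h^{(N)})/N (which is finite). In particular the total ergotropy ℰ_tot(ρ;h) := ⨆_{N≥1} ℰ(ρ^{⊗N}; h^{(N)})/N satisfies ℰ_tot(ρ;h) ≥ ℰ(ρ;h). -/

import Mathlib

open Matrix Filter Topology
open scoped ComplexOrder Kronecker

noncomputable section

/-- A density matrix: positive semidefinite with unit trace. -/
def IsDensity {n : Type*} [Fintype n] [DecidableEq n] (ρ : Matrix n n ℂ) : Prop :=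
  ρ.PosSemidef ∧ ρ.trace = 1

/-- The ergotropy `ℰ(ρ;H) = ⨆_{U ∈ U(d)} (re Tr[ρH] − re Tr[U ρ U† H])`. -/
def ergo {n : Type*} [Fintype n] [DecidableEq n] (ρ H : Matrix n n ℂ) : ℝ :=
  ⨆ U : Matrix.unitaryGroup n ℂ,
    ((ρ * H).trace.re -
      ((U : Matrix n n ℂ) * ρ * star (U : Matrix n n ℂ) * H).trace.re)

/-- `N`-fold tensor power of a `d × d` matrix:
`ρ^{⊗N} f g = ∏_{i<N} ρ (f i) (g i)`. -/
def tpow {d : ℕ} (ρ : Matrix (Fin d) (Fin d) ℂ) (N : ℕ) :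
    Matrix (Fin N → Fin d) (Fin N → Fin d) ℂ :=
  Matrix.of fun f g => ∏ i, ρ (f i) (g i)

/-- Tensor product `ρ₁ ⊗ ⋯ ⊗ ρₙ` of `n` single-site matrices. -/
def prodMat {d n : ℕ} (ρs : Fin n → Matrix (Fin d) (Fin d) ℂ) :
    Matrix (Fin n → Fin d) (Fin n → Fin d) ℂ :=
  Matrix.of fun f g => ∏ i, ρs i (f i) (g i)

/-- Noninteracting `N`-site Hamiltonian:
`h^{(N)} f g = Σ_{i<N} h (f i) (g i) · ∏_{j≠i} (if f j = g j then 1 else 0)`. -/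
def hSum {d : ℕ} (h : Matrix (Fin d) (Fin d) ℂ) (N : ℕ) :
    Matrix (Fin N → Fin d) (Fin N → Fin d) ℂ :=
  Matrix.of fun f g =>
    ∑ i, h (f i) (g i) * ∏ j ∈ Finset.univ.erase i, (if f j = g j then (1:ℂ) else 0)

/-- The ampliation `Λ ⊗ id_k` of a linear map on `d × d` matrices. -/
def Ampliation {d : ℕ} (Λ : Matrix (Fin d) (Fin d) ℂ →ₗ[ℂ] Matrix (Fin d) (Fin d) ℂ)
    (k : ℕ) (M : Matrix (Fin d × Fin k) (Fin d × Fin k) ℂ) :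
    Matrix (Fin d × Fin k) (Fin d × Fin k) ℂ :=
  Matrix.of fun p q => Λ (Matrix.of fun i' j' => M (i', p.2) (j', q.2)) p.1 q.1

/-- A quantum channel: a ℂ-linear, trace-preserving, completely positive map. -/
def IsChannel {d : ℕ} (Λ : Matrix (Fin d) (Fin d) ℂ →ₗ[ℂ] Matrix (Fin d) (Fin d) ℂ) : Prop :=
  (∀ M, (Λ M).trace = M.trace) ∧
  ∀ k : ℕ, ∀ M : Matrix (Fin d × Fin k) (Fin d × Fin k) ℂ,
    M.PosSemidef → (Ampliation Λ k M).PosSemidef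

/-- Local ergotropy of an `n`-site state: the supremum is restricted to
product unitaries `U₁ ⊗ ⋯ ⊗ Uₙ`. -/
def locErgo {d n : ℕ} (σ H : Matrix (Fin n → Fin d) (Fin n → Fin d) ℂ) : ℝ :=
  ⨆ U : Fin n → Matrix.unitaryGroup (Fin d) ℂ,
    ((σ * H).trace.re -
      ((prodMat fun i => (U i : Matrix (Fin d) (Fin d) ℂ)) * σ *
        star (prodMat fun i => (U i : Matrix (Fin d) (Fin d) ℂ)) * H).trace.re)

/-- Von Neumann entropy `S(σ) = Σ_i −λ_i log λ_i` of a Hermitian matrix. -/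
def vnEntropy {n : Type*} [Fintype n] [DecidableEq n]
    {σ : Matrix n n ℂ} (hσ : σ.IsHermitian) : ℝ :=
  ∑ i, Real.negMulLog (hσ.eigenvalues i)

/-- `i`-th single-site reduced density matrix of an `n`-site state. -/
def red {d n : ℕ} (ρ : Matrix (Fin n → Fin d) (Fin n → Fin d) ℂ) (i : Fin n) :
    Matrix (Fin d) (Fin d) ℂ :=
  Matrix.of fun a b =>
    ∑ f ∈ Finset.univ.filter (fun f : Fin n → Fin d => f i = a), ρ f (Function.update f i b)

/-- Separability: `ρ` is a convex combination of product density matrices. -/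
def SepState {d n : ℕ} (ρ : Matrix (Fin n → Fin d) (Fin n → Fin d) ℂ) : Prop :=
  ∃ (m : ℕ) (p : Fin m → ℝ) (σs : Fin m → Fin n → Matrix (Fin d) (Fin d) ℂ),
    (∀ k, 0 ≤ p k) ∧ (∑ k, p k = 1) ∧ (∀ k i, IsDensity (σs k i)) ∧
    ρ = ∑ k, (p k : ℂ) • prodMat (σs k)

/-- Total ergotropy `ℰ_tot(σ;h) = ⨆_{N≥1} ℰ(σ^{⊗N}; h^{(N)})/N`. -/
def Etot {d : ℕ} (σ h : Matrix (Fin d) (Fin d) ℂ) : ℝ :=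
  ⨆ N : ℕ+, ergo (tpow σ (N:ℕ)) (hSum h (N:ℕ)) / (N:ℕ)

/-- Largest eigenvalue of a Hermitian matrix. -/
def lamMax {d : ℕ} {h : Matrix (Fin d) (Fin d) ℂ} (hh : h.IsHermitian) : ℝ :=
  ⨆ i, hh.eigenvalues i

/-- Single-shot energy-constrained maximal output ergotropy `ℰ^{(1)}(Λ;e)`. -/
def E1 {d : ℕ} (Λ : Matrix (Fin d) (Fin d) ℂ →ₗ[ℂ] Matrix (Fin d) (Fin d) ℂ)
    (h : Matrix (Fin d) (Fin d) ℂ) (e : ℝ) : ℝ :=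
  sSup {x | ∃ ρ : Matrix (Fin d) (Fin d) ℂ,
    IsDensity ρ ∧ (ρ * h).trace.re ≤ e ∧ x = ergo (Λ ρ) h}

/-- Single-shot energy-constrained maximal output total ergotropy `ℰ_tot^{(1)}(Λ;e)`. -/
def E1tot {d : ℕ} (Λ : Matrix (Fin d) (Fin d) ℂ →ₗ[ℂ] Matrix (Fin d) (Fin d) ℂ)
    (h : Matrix (Fin d) (Fin d) ℂ) (e : ℝ) : ℝ :=
  sSup {x | ∃ ρ : Matrix (Fin d) (Fin d) ℂ,
    IsDensity ρ ∧ (ρ * h).trace.re ≤ e ∧ x = Etot (Λ ρ) h}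

/-- `χ(Λ;e)`: supremum of `Σ_j p_j ℰ^{(1)}(Λ;e_j)` over finite probability vectors
`(p_j)` and energies `e_j ∈ [0, lmax]` with `Σ_j p_j e_j ≤ e`. -/
def chi {d : ℕ} (Λ : Matrix (Fin d) (Fin d) ℂ →ₗ[ℂ] Matrix (Fin d) (Fin d) ℂ)
    (h : Matrix (Fin d) (Fin d) ℂ) (lmax e : ℝ) : ℝ :=
  sSup {x | ∃ (m : ℕ) (p ev : Fin m → ℝ),
    (∀ j, 0 ≤ p j) ∧ (∑ j, p j = 1) ∧ (∀ j, ev j ∈ Set.Icc (0:ℝ) lmax) ∧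
    (∑ j, p j * ev j ≤ e) ∧ x = ∑ j, p j * E1 Λ h (ev j)}

/-- `χ_tot(Λ;e)`: as `χ` but with the total ergotropy. -/
def chiTot {d : ℕ} (Λ : Matrix (Fin d) (Fin d) ℂ →ₗ[ℂ] Matrix (Fin d) (Fin d) ℂ)
    (h : Matrix (Fin d) (Fin d) ℂ) (lmax e : ℝ) : ℝ :=
  sSup {x | ∃ (m : ℕ) (p ev : Fin m → ℝ),
    (∀ j, 0 ≤ p j) ∧ (∑ j, p j = 1) ∧ (∀ j, ev j ∈ Set.Icc (0:ℝ) lmax) ∧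
    (∑ j, p j * ev j ≤ e) ∧ x = ∑ j, p j * E1tot Λ h (ev j)}

/-- `ℰ_loc^{(n)}(Λ;E)`. -/
def ElocN {d : ℕ}
    (Λfam : ∀ n : ℕ, Matrix (Fin n → Fin d) (Fin n → Fin d) ℂ →ₗ[ℂ]
      Matrix (Fin n → Fin d) (Fin n → Fin d) ℂ)
    (h : Matrix (Fin d) (Fin d) ℂ) (n : ℕ) (E : ℝ) : ℝ :=
  sSup {x | ∃ ρ : Matrix (Fin n → Fin d) (Fin n → Fin d) ℂ,
    IsDensity ρ ∧ (ρ * hSum h n).trace.re ≤ E ∧ x = locErgo (Λfam n ρ) (hSum h n)}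

/-- `ℰ_{loc,sep}^{(n)}(Λ;E)`. -/
def ElocSepN {d : ℕ}
    (Λfam : ∀ n : ℕ, Matrix (Fin n → Fin d) (Fin n → Fin d) ℂ →ₗ[ℂ]
      Matrix (Fin n → Fin d) (Fin n → Fin d) ℂ)
    (h : Matrix (Fin d) (Fin d) ℂ) (n : ℕ) (E : ℝ) : ℝ :=
  sSup {x | ∃ ρ : Matrix (Fin n → Fin d) (Fin n → Fin d) ℂ,
    IsDensity ρ ∧ SepState ρ ∧ (ρ * hSum h n).trace.re ≤ E ∧
    x = locErgo (Λfam n ρ) (hSum h n)}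

/-- `ℰ_sep^{(n)}(Λ;E)`. -/
def EsepN {d : ℕ}
    (Λfam : ∀ n : ℕ, Matrix (Fin n → Fin d) (Fin n → Fin d) ℂ →ₗ[ℂ]
      Matrix (Fin n → Fin d) (Fin n → Fin d) ℂ)
    (h : Matrix (Fin d) (Fin d) ℂ) (n : ℕ) (E : ℝ) : ℝ :=
  sSup {x | ∃ ρ : Matrix (Fin n → Fin d) (Fin n → Fin d) ℂ,
    IsDensity ρ ∧ SepState ρ ∧ (ρ * hSum h n).trace.re ≤ E ∧
    x = ergo (Λfam n ρ) (hSum h n)}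

/-!
Let `a N = ℰ(ρ^{⊗N}; h^{(N)})`. Splitting `m + n` sites into `m` and `n` turns `ρ^{⊗(m+n)}` into
`ρ^{⊗m} ⊗ ρ^{⊗n}` and `h^{(m+n)}` into `h^{(m)} ⊗ 1 + 1 ⊗ h^{(n)}`, so the product unitary `U ⊗ V`
extracts the sum of the works extracted by `U` and by `V`, and `a` is superadditive. Moreover
`|Tr[σ H]| ≤ ‖H‖` for a state `σ`, and `‖h^{(N)}‖ ≤ N ‖h‖` because `h^{(N)}` is the sum of the
images of `h` under `N` `⋆`-homomorphisms, which are contractive. Thus `a N / N ≤ 2 ‖h‖`, and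
Fekete's lemma applies.
-/

theorem tendsto_div_iSup_of_superadditive {u : ℕ → ℝ} (hu : ∀ m n, u m + u n ≤ u (m + n))
    (hbdd : BddAbove (Set.range fun N : ℕ+ => u N / (N : ℕ))) :
    Tendsto (fun N => u N / N) atTop (𝓝 (⨆ N : ℕ+, u N / (N : ℕ))) := by
  have hsub : Subadditive fun N => -u N := fun m n => by linarith [hu m n]
  refine tendsto_order.2 ⟨fun l hl => ?_, fun L hL => ?_⟩
  · obtain ⟨N, hN⟩ := exists_lt_of_lt_ciSup hl
    have hlt : -u N / (N : ℕ) < -l := by rwa [neg_div, neg_lt_neg_iff]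
    filter_upwards [hsub.eventually_div_lt_of_div_lt N.ne_zero hlt] with p hp
    rwa [neg_div, neg_lt_neg_iff] at hp
  · filter_upwards [eventually_gt_atTop 0] with N hN
    exact (le_ciSup hbdd ⟨N, hN⟩).trans_lt hL

lemma trace_submatrix_equiv {m n R : Type*} [Fintype m] [Fintype n] [AddCommMonoid R] (e : m ≃ n)
    (A : Matrix n n R) : (A.submatrix e e).trace = A.trace :=
  e.sum_comp fun i => A i i

lemma trace_mul_mul_mul_rotate {l m n p R : Type*} [Fintype l] [Fintype m] [Fintype n]
    [Fintype p] [CommSemiring R] (A : Matrix l m R) (B : Matrix m n R) (C : Matrix n p R)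
    (D : Matrix p l R) : (A * B * C * D).trace = (B * (C * D * A)).trace := by
  simp only [Matrix.mul_assoc]
  rw [trace_mul_comm]
  simp only [Matrix.mul_assoc]

lemma trace_unitary_conj {n R : Type*} [Fintype n] [DecidableEq n] [CommRing R] [StarRing R]
    (U : unitaryGroup n R) (A : Matrix n n R) :
    ((U : Matrix n n R) * A * star (U : Matrix n n R)).trace = A.trace := by
  rw [trace_mul_cycle, Unitary.coe_star_mul_self, one_mul]

lemma norm_unitary_star_conj {E : Type*} [NormedRing E] [StarRing E] [CStarRing E] (U : unitary E)
    (a : E) : ‖star (U : E) * a * U‖ = ‖a‖ := by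
  rw [CStarRing.norm_mul_coe_unitary, ← Unitary.coe_star, CStarRing.norm_coe_unitary_mul]

section Trace

variable {n : Type*} [Fintype n] [DecidableEq n]

open scoped Matrix.Norms.L2Operator

lemma norm_entry_le_l2_opNorm {m 𝕜 : Type*} [Fintype m] [RCLike 𝕜] (M : Matrix m n 𝕜) (i : m)
    (j : n) : ‖M i j‖ ≤ ‖M‖ := by
  let e : EuclideanSpace 𝕜 n := EuclideanSpace.single j 1
  calc ‖M i j‖ = ‖WithLp.toLp 2 (M *ᵥ e) i‖ := by simp [e]
    _ ≤ ‖WithLp.toLp 2 (M *ᵥ e)‖ := PiLp.norm_apply_le (WithLp.toLp 2 (M *ᵥ e)) i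
    _ ≤ ‖M‖ * ‖e‖ := l2_opNorm_mulVec M e
    _ = ‖M‖ := by simp [e]

lemma norm_trace_diagonal_mul_le {p : n → ℝ} (hp : ∀ i, 0 ≤ p i) (M : Matrix n n ℂ) :
    ‖(diagonal (fun i => (p i : ℂ)) * M).trace‖ ≤ (∑ i, p i) * ‖M‖ := by
  simp only [trace, diag_apply, diagonal_mul, Finset.sum_mul]
  refine norm_sum_le_of_le _ fun i _ => ?_
  rw [norm_mul, Complex.norm_of_nonneg (hp i)]
  exact mul_le_mul_of_nonneg_left (norm_entry_le_l2_opNorm M i i) (hp i)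

lemma norm_trace_mul_le {σ : Matrix n n ℂ} (hσ : σ.PosSemidef) (H : Matrix n n ℂ) :
    ‖(σ * H).trace‖ ≤ σ.trace.re * ‖H‖ := by
  have htrace : σ.trace.re = ∑ i, hσ.1.eigenvalues i := by
    simp [hσ.1.trace_eq_sum_eigenvalues]
  have hdiag := hσ.1.spectral_theorem
  rw [Unitary.conjStarAlgAut_apply] at hdiag
  have hconj := congrArg (fun τ => (τ * H).trace) hdiag
  rw [trace_mul_mul_mul_rotate] at hconj
  rw [htrace, hconj, ← norm_unitary_star_conj hσ.1.eigenvectorUnitary H]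
  exact norm_trace_diagonal_mul_le hσ.eigenvalues_nonneg _

end Trace

section Ergotropy

variable {m n : Type*} [Fintype m] [DecidableEq m] [Fintype n] [DecidableEq n]

/-- The work extracted from the state `σ` by the unitary `U` under the Hamiltonian `H`, so that
`ergo σ H` is its supremum over `U`. -/
def extractedWork (σ H : Matrix n n ℂ) (U : unitaryGroup n ℂ) : ℝ :=
  (σ * H).trace.re - ((U : Matrix n n ℂ) * σ * star (U : Matrix n n ℂ) * H).trace.re

lemma ergo_eq_iSup_extractedWork (σ H : Matrix n n ℂ) : ergo σ H = ⨆ U, extractedWork σ H U := rfl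

section Bound

open scoped Matrix.Norms.L2Operator

lemma extractedWork_le {σ : Matrix n n ℂ} (hσ : IsDensity σ) (H : Matrix n n ℂ)
    (U : unitaryGroup n ℂ) : extractedWork σ H U ≤ 2 * ‖H‖ := by
  have henergy (K : Matrix n n ℂ) : |(σ * K).trace.re| ≤ ‖K‖ := by
    simpa [hσ.2] using (Complex.abs_re_le_norm _).trans (norm_trace_mul_le hσ.1 K)
  have hbefore := henergy H
  have hafter := henergy (star (U : Matrix n n ℂ) * H * U)
  rw [norm_unitary_star_conj, ← trace_mul_mul_mul_rotate] at hafter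
  unfold extractedWork
  linarith [(abs_le.mp hbefore).2, (abs_le.mp hafter).1]

lemma bddAbove_range_extractedWork {σ : Matrix n n ℂ} (hσ : IsDensity σ) (H : Matrix n n ℂ) :
    BddAbove (Set.range (extractedWork σ H)) :=
  ⟨2 * ‖H‖, Set.forall_mem_range.2 (extractedWork_le hσ H)⟩

lemma ergo_le_two_mul_norm {σ : Matrix n n ℂ} (hσ : IsDensity σ) (H : Matrix n n ℂ) :
    ergo σ H ≤ 2 * ‖H‖ :=
  ciSup_le (extractedWork_le hσ H)

end Bound

/-- The isomorphism of unitary groups induced by relabelling the basis along `e`; it transports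
the optimization defining `ergo` between index types. -/
def unitaryGroupReindex {R : Type*} [CommRing R] [StarRing R] (e : m ≃ n) :
    unitaryGroup m R ≃⋆* unitaryGroup n R :=
  Unitary.mapEquiv
    { (reindexAlgEquiv R R e).toMulEquiv with
      map_star' := fun M => (conjTranspose_reindex e e M).symm }

lemma coe_unitaryGroupReindex {R : Type*} [CommRing R] [StarRing R] (e : m ≃ n)
    (U : unitaryGroup m R) :
    (unitaryGroupReindex e U : Matrix n n R) = (U : Matrix m m R).submatrix e.symm e.symm := rfl

lemma extractedWork_unitaryGroupReindex (e : m ≃ n) (σ H : Matrix n n ℂ) (U : unitaryGroup m ℂ) :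
    extractedWork σ H (unitaryGroupReindex e U) =
      extractedWork (σ.submatrix e e) (H.submatrix e e) U := by
  have hU : (U : Matrix m m ℂ) = (unitaryGroupReindex e U : Matrix n n ℂ).submatrix e e := by
    simp [coe_unitaryGroupReindex]
  simp only [extractedWork, hU, star_eq_conjTranspose, conjTranspose_submatrix,
    submatrix_mul_equiv, trace_submatrix_equiv]

lemma ergo_submatrix_equiv (e : m ≃ n) (σ H : Matrix n n ℂ) :
    ergo (σ.submatrix e e) (H.submatrix e e) = ergo σ H :=
  (unitaryGroupReindex e).toEquiv.iSup_congr (extractedWork_unitaryGroupReindex e σ H)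

lemma IsDensity.kronecker {σ : Matrix m m ℂ} {τ : Matrix n n ℂ} (hσ : IsDensity σ)
    (hτ : IsDensity τ) : IsDensity (σ ⊗ₖ τ) :=
  ⟨hσ.1.kronecker hτ.1, by rw [trace_kronecker, hσ.2, hτ.2, one_mul]⟩

lemma extractedWork_kronecker {σ : Matrix m m ℂ} {τ : Matrix n n ℂ} (hσ : σ.trace = 1)
    (hτ : τ.trace = 1) (H : Matrix m m ℂ) (K : Matrix n n ℂ) (U : unitaryGroup m ℂ)
    (V : unitaryGroup n ℂ) :
    extractedWork (σ ⊗ₖ τ) (H ⊗ₖ 1 + 1 ⊗ₖ K) ⟨_, kronecker_mem_unitary U.2 V.2⟩ =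
      extractedWork σ H U + extractedWork τ K V := by
  have hU := (trace_unitary_conj U σ).trans hσ
  have hV := (trace_unitary_conj V τ).trans hτ
  simp only [star_eq_conjTranspose] at hU hV
  simp only [extractedWork, star_eq_conjTranspose, conjTranspose_kronecker, mul_add,
    ← mul_kronecker_mul, trace_add, trace_kronecker, mul_one, hσ, hτ, hU, hV, one_mul,
    Complex.add_re]
  ring

theorem ergo_add_ergo_le_ergo_kronecker {σ : Matrix m m ℂ} {τ : Matrix n n ℂ} (hσ : IsDensity σ)
    (hτ : IsDensity τ) (H : Matrix m m ℂ) (K : Matrix n n ℂ) :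
    ergo σ H + ergo τ K ≤ ergo (σ ⊗ₖ τ) (H ⊗ₖ 1 + 1 ⊗ₖ K) := by
  simp only [ergo_eq_iSup_extractedWork]
  refine ciSup_add_ciSup_le fun U V => ?_
  rw [← extractedWork_kronecker hσ.2 hτ.2]
  exact le_ciSup (bddAbove_range_extractedWork (hσ.kronecker hτ) _) _

end Ergotropy

section ProductMatrix

variable {d n : ℕ}

lemma prodMat_mul (A B : Fin n → Matrix (Fin d) (Fin d) ℂ) :
    prodMat (A * B) = prodMat A * prodMat B := by
  ext f g
  simp only [prodMat, of_apply, Pi.mul_apply, mul_apply, ← Finset.prod_mul_distrib]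
  exact Fintype.prod_sum fun i c => A i (f i) c * B i c (g i)

lemma prodMat_star (A : Fin n → Matrix (Fin d) (Fin d) ℂ) :
    prodMat (star A) = star (prodMat A) := by
  ext f g
  simp [prodMat, star_apply]

lemma prodMat_one : prodMat (1 : Fin n → Matrix (Fin d) (Fin d) ℂ) = 1 := by
  ext f g
  simp [prodMat, one_apply, Finset.prod_ite_zero, funext_iff]

lemma trace_prodMat (A : Fin n → Matrix (Fin d) (Fin d) ℂ) :
    (prodMat A).trace = ∏ i, (A i).trace :=
  (Fintype.prod_sum fun i c => A i c c).symm

lemma prodMat_submatrix_append {m : ℕ} (A : Fin (m + n) → Matrix (Fin d) (Fin d) ℂ) :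
    (prodMat A).submatrix (Fin.appendEquiv m n) (Fin.appendEquiv m n) =
      prodMat (fun i => A (Fin.castAdd n i)) ⊗ₖ prodMat (fun i => A (Fin.natAdd m i)) := by
  ext
  simp [prodMat, Fin.appendEquiv, Fin.prod_univ_add]

open scoped MatrixOrder Matrix.Norms.L2Operator in
lemma posSemidef_prodMat {A : Fin n → Matrix (Fin d) (Fin d) ℂ} (hA : ∀ i, (A i).PosSemidef) :
    (prodMat A).PosSemidef := by
  choose B hB using fun i => CStarAlgebra.nonneg_iff_eq_star_mul_self.mp (hA i).nonneg
  have hAB : A = star B * B := funext hB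
  rw [hAB, prodMat_mul, prodMat_star]
  exact posSemidef_conjTranspose_mul_self _

lemma isDensity_prodMat {A : Fin n → Matrix (Fin d) (Fin d) ℂ} (hA : ∀ i, IsDensity (A i)) :
    IsDensity (prodMat A) :=
  ⟨posSemidef_prodMat fun i => (hA i).1, by simp [trace_prodMat, (hA _).2]⟩

lemma prodMat_mulSingle_apply (i : Fin n) (A : Matrix (Fin d) (Fin d) ℂ) (f g : Fin n → Fin d) :
    prodMat (Pi.mulSingle i A) f g =
      A (f i) (g i) * ∏ j ∈ Finset.univ.erase i, if f j = g j then 1 else 0 := by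
  rw [prodMat, of_apply, ← Finset.mul_prod_erase _ _ (Finset.mem_univ i), Pi.mulSingle_eq_same]
  congr 1
  refine Finset.prod_congr rfl fun j hj => ?_
  rw [Pi.mulSingle_eq_of_ne (Finset.ne_of_mem_erase hj), one_apply]

/-- The embedding `A ↦ 1 ⊗ ⋯ ⊗ A ⊗ ⋯ ⊗ 1` of the single-site observables as the observables
of site `i`. -/
def siteHom (i : Fin n) :
    Matrix (Fin d) (Fin d) ℂ →⋆ₙₐ[ℂ] Matrix (Fin n → Fin d) (Fin n → Fin d) ℂ where
  toFun A := prodMat (Pi.mulSingle i A)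
  map_smul' c A := by ext; simp [prodMat_mulSingle_apply, mul_assoc]
  map_zero' := by ext; simp [prodMat_mulSingle_apply]
  map_add' A B := by ext; simp [prodMat_mulSingle_apply, add_mul]
  map_mul' A B := by rw [Pi.mulSingle_mul, prodMat_mul]
  map_star' A := by
    rw [← prodMat_star]
    congr 1
    ext1 j
    exact (Pi.apply_mulSingle (fun _ : Fin n => star)
      (fun _ => star_one (Matrix (Fin d) (Fin d) ℂ)) i A j).symm

lemma siteHom_apply (i : Fin n) (A : Matrix (Fin d) (Fin d) ℂ) :
    siteHom i A = prodMat (Pi.mulSingle i A) := rfl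

lemma hSum_eq_sum_siteHom (h : Matrix (Fin d) (Fin d) ℂ) (n : ℕ) :
    hSum h n = ∑ i, siteHom i h := by
  ext f g
  simp only [hSum, of_apply, Matrix.sum_apply, siteHom_apply, prodMat_mulSingle_apply]

open scoped Matrix.Norms.L2Operator in
lemma norm_hSum_le (h : Matrix (Fin d) (Fin d) ℂ) (n : ℕ) : ‖hSum h n‖ ≤ n * ‖h‖ := by
  rw [hSum_eq_sum_siteHom]
  calc ‖∑ i, siteHom i h‖ ≤ ∑ _i : Fin n, ‖h‖ :=
        norm_sum_le_of_le _ fun i _ => NonUnitalStarAlgHom.norm_apply_le (siteHom i) h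
    _ = n * ‖h‖ := by simp

lemma siteHom_castAdd_submatrix_append {m : ℕ} (i : Fin m) (A : Matrix (Fin d) (Fin d) ℂ) :
    (siteHom (Fin.castAdd n i) A).submatrix (Fin.appendEquiv m n) (Fin.appendEquiv m n) =
      siteHom i A ⊗ₖ 1 := by
  rw [siteHom_apply, prodMat_submatrix_append, siteHom_apply, ← prodMat_one]
  congr 2 <;> ext1 j
  · simp [Pi.mulSingle_apply]
  · simp [Pi.mulSingle_apply, Fin.ext_iff]
    omega

lemma siteHom_natAdd_submatrix_append {m : ℕ} (i : Fin n) (A : Matrix (Fin d) (Fin d) ℂ) :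
    (siteHom (Fin.natAdd m i) A).submatrix (Fin.appendEquiv m n) (Fin.appendEquiv m n) =
      1 ⊗ₖ siteHom i A := by
  rw [siteHom_apply, prodMat_submatrix_append, siteHom_apply, ← prodMat_one]
  congr 2 <;> ext1 j
  · simp [Pi.mulSingle_apply, Fin.ext_iff]
    omega
  · simp [Pi.mulSingle_apply]

end ProductMatrix

section TensorPower

variable {d : ℕ} (ρ h : Matrix (Fin d) (Fin d) ℂ)

lemma isDensity_tpow {ρ : Matrix (Fin d) (Fin d) ℂ} (hρ : IsDensity ρ) (N : ℕ) :
    IsDensity (tpow ρ N) :=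
  isDensity_prodMat fun _ => hρ

lemma tpow_add_submatrix_append (m n : ℕ) :
    (tpow ρ (m + n)).submatrix (Fin.appendEquiv m n) (Fin.appendEquiv m n) =
      tpow ρ m ⊗ₖ tpow ρ n :=
  prodMat_submatrix_append fun _ => ρ

lemma hSum_add_submatrix_append (m n : ℕ) :
    (hSum h (m + n)).submatrix (Fin.appendEquiv m n) (Fin.appendEquiv m n) =
      hSum h m ⊗ₖ 1 + 1 ⊗ₖ hSum h n := by
  ext p q
  have hleft (i : Fin m) := congr_fun₂ (siteHom_castAdd_submatrix_append (n := n) i h) p q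
  have hright (i : Fin n) := congr_fun₂ (siteHom_natAdd_submatrix_append (m := m) i h) p q
  simp only [submatrix_apply, kroneckerMap_apply] at hleft hright
  simp only [hSum_eq_sum_siteHom, submatrix_apply, Matrix.add_apply, kroneckerMap_apply,
    Matrix.sum_apply, Fin.sum_univ_add, Finset.sum_mul, Finset.mul_sum, hleft, hright]

lemma ergo_tpow_one : ergo (tpow ρ 1) (hSum h 1) = ergo ρ h := by
  let e := (Equiv.funUnique (Fin 1) (Fin d)).symm
  have hρ : (tpow ρ 1).submatrix e e = ρ := by ext; simp [tpow, e]
  have hh : (hSum h 1).submatrix e e = h := by ext; simp [hSum, e]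
  rw [← ergo_submatrix_equiv e, hρ, hh]

variable {ρ}

theorem ergo_tpow_superadditive (hρ : IsDensity ρ) (m n : ℕ) :
    ergo (tpow ρ m) (hSum h m) + ergo (tpow ρ n) (hSum h n) ≤
      ergo (tpow ρ (m + n)) (hSum h (m + n)) := by
  rw [← ergo_submatrix_equiv (Fin.appendEquiv m n), tpow_add_submatrix_append,
    hSum_add_submatrix_append]
  exact ergo_add_ergo_le_ergo_kronecker (isDensity_tpow hρ m) (isDensity_tpow hρ n) _ _

open scoped Matrix.Norms.L2Operator in
theorem bddAbove_ergo_tpow_div (hρ : IsDensity ρ) :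
    BddAbove (Set.range fun N : ℕ+ => ergo (tpow ρ (N:ℕ)) (hSum h (N:ℕ)) / (N:ℕ)) := by
  refine ⟨2 * ‖h‖, Set.forall_mem_range.2 fun N => ?_⟩
  rw [div_le_iff₀ (by exact_mod_cast N.pos)]
  linarith [ergo_le_two_mul_norm (isDensity_tpow hρ N) (hSum h N), norm_hSum_le h N]

end TensorPower

theorem statement4_general {d : ℕ} (ρ h : Matrix (Fin d) (Fin d) ℂ) (hρ : IsDensity ρ) :
    BddAbove (Set.range fun N : ℕ+ => ergo (tpow ρ (N:ℕ)) (hSum h (N:ℕ)) / (N:ℕ)) ∧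
    Tendsto (fun N : ℕ => ergo (tpow ρ N) (hSum h N) / N) atTop
      (𝓝 (⨆ N : ℕ+, ergo (tpow ρ (N:ℕ)) (hSum h (N:ℕ)) / (N:ℕ))) ∧
    ergo ρ h ≤ ⨆ N : ℕ+, ergo (tpow ρ (N:ℕ)) (hSum h (N:ℕ)) / (N:ℕ) := by
  have hbdd := bddAbove_ergo_tpow_div h hρ
  refine ⟨hbdd, tendsto_div_iSup_of_superadditive (ergo_tpow_superadditive h hρ) hbdd, ?_⟩
  calc ergo ρ h = ergo (tpow ρ ((1 : ℕ+) : ℕ)) (hSum h ((1 : ℕ+) : ℕ)) / ((1 : ℕ+) : ℕ) := by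
        rw [PNat.one_coe, ergo_tpow_one, Nat.cast_one, div_one]
    _ ≤ _ := le_ciSup hbdd 1

theorem statement4 {d : ℕ} (ρ h : Matrix (Fin d) (Fin d) ℂ)
    (hρ : IsDensity ρ) (hh : h.IsHermitian) :
    BddAbove (Set.range fun N : ℕ+ => ergo (tpow ρ (N:ℕ)) (hSum h (N:ℕ)) / (N:ℕ)) ∧
    Tendsto (fun N : ℕ => ergo (tpow ρ N) (hSum h N) / N) atTop
      (𝓝 (⨆ N : ℕ+, ergo (tpow ρ (N:ℕ)) (hSum h (N:ℕ)) / (N:ℕ))) ∧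
    ergo ρ h ≤ ⨆ N : ℕ+, ergo (tpow ρ (N:ℕ)) (hSum h (N:ℕ)) / (N:ℕ) :=
  statement4_general ρ h hρ

end
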